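/- lim sup_{n→∞} W_3(n)^{1/n} ≤ 12.53296…, i.e., the exponential growth rate of 3-stack sortable permutations is at most 12.533. -/

import Mathlib

open Filter

def push (x : ℕ) : List ℕ → List ℕ → List ℕ × List ℕ
  | [], out => ([x], out)
  | t :: s, out => if t < x then push x s (out ++ [t]) else (x :: t :: s, out)

def sortAux : List ℕ → List ℕ → List ℕ → List ℕ
  | [], stack, out => out ++ stack
  | x :: xs, stack, out =>
      let r := push x stack out
      sortAux xs r.1 r.2

/-- The stack sorting map `s`: `s(∅) = ∅` and `s(L n R) = s(L) s(R) n` with `n` maximal. -/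
def stackSort (p : List ℕ) : List ℕ := sortAux p [] []

/-- The number of 3-stack sortable permutations of length `n`. -/
noncomputable def W₃ (n : ℕ) : ℕ :=
  {p : List ℕ | p.Perm (List.range' 1 n) ∧
    stackSort^[3] p = List.range' 1 n}.ncard

/-- Taylor coefficients at `0` of `√(1 - a u + b u²)`. -/
noncomputable def sqrtCoeff (a b : ℝ) : ℕ → ℝ
  | 0 => 1
  | 1 => -a / 2
  | m + 2 => (a * (2 * m + 1) * sqrtCoeff a b (m + 1) - 2 * b * (m - 1) * sqrtCoeff a b m) /
      (2 * (m + 2))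

section PowerSeriesSqrt
open PowerSeries

theorem sqrtCoeff_sq (a b : ℝ) :
    (mk (sqrtCoeff a b)) ^ 2 = 1 - C a * X + C b * X ^ 2 := by
  set H := mk (sqrtCoeff a b) with hH
  set Q : PowerSeries ℝ := 1 - C a * X + C b * X ^ 2 with hQ
  have hQ0 : constantCoeff Q ≠ 0 := by simp [hQ]
  have hdQ : d⁄dX ℝ Q = -C a + 2 * C b * X := by
    simp [hQ, Derivation.leibniz_pow]
    ring
  have hode : 2 * Q * d⁄dX ℝ H = d⁄dX ℝ Q * H := by
    rw [hdQ]
    have e1 : 2 * Q * d⁄dX ℝ H = 2 * d⁄dX ℝ H - C (2 * a) * (X * d⁄dX ℝ H)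
        + C (2 * b) * (X * (X * d⁄dX ℝ H)) := by
      rw [hQ]; simp only [map_mul, map_ofNat]; ring
    have e2 : (-C a + 2 * C b * X) * H = - (C a * H) + C (2 * b) * (X * H) := by
      simp only [map_mul, map_ofNat]; ring
    have e3 : (2 : PowerSeries ℝ) = C 2 := (map_ofNat C 2).symm
    rw [e1, e2, e3]
    ext m
    rcases m with _ | _ | m
    · simp only [map_add, map_sub, coeff_C_mul, coeff_zero_X_mul, coeff_derivative, hH, coeff_mk,
        map_neg, sqrtCoeff]
      push_cast
      ring
    · simp only [map_add, map_sub, coeff_C_mul, coeff_succ_X_mul, coeff_zero_X_mul,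
        coeff_derivative, hH, coeff_mk, map_neg, sqrtCoeff]
      push_cast
      ring
    · simp only [map_add, map_sub, coeff_C_mul, coeff_succ_X_mul, coeff_derivative, hH, coeff_mk,
        map_neg, sqrtCoeff]
      push_cast
      field_simp
      ring
  have hunit : Q * Q⁻¹ = 1 := PowerSeries.mul_inv_cancel _ hQ0
  have key : H ^ 2 * Q⁻¹ = 1 := by
    apply PowerSeries.derivative.ext
    · rw [Derivation.leibniz, Derivation.leibniz_pow, PowerSeries.derivative_inv']
      simp only [smul_eq_mul, nsmul_eq_mul, Derivation.map_one_eq_zero]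
      have : H ^ 2 * (-Q⁻¹ ^ 2 * d⁄dX ℝ Q) + Q⁻¹ * (((2 : ℕ) : PowerSeries ℝ) * (H ^ (2 - 1) * d⁄dX ℝ H))
        = Q⁻¹ ^ 2 * H * (2 * Q * d⁄dX ℝ H - d⁄dX ℝ Q * H) +
          2 * Q⁻¹ * H * d⁄dX ℝ H * (1 - Q * Q⁻¹) := by
        push_cast; ring
      rw [this, hode, hunit]; ring
    · simp [hH, hQ, sqrtCoeff]
  calc H ^ 2 = H ^ 2 * (Q * Q⁻¹) := by rw [hunit, mul_one]
    _ = (H ^ 2 * Q⁻¹) * Q := by ring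
    _ = Q := by rw [key, one_mul]

end PowerSeriesSqrt

/-- Weight of a single entry at which the generating function of two-stack sortable
permutations is bounded. -/
noncomputable def zVal : ℝ := 36324729 / 1073105275

/-- Weight of an ascent. -/
noncomputable def qVal : ℝ := 2209 / 196

/-- Value of the generating function at `(zVal, qVal)`. -/
noncomputable def sVal : ℝ := 12403404 / 181953121

/-- The double root of the discriminant is `1 / rVal`. -/
noncomputable def rVal : ℝ := 3157 / 3481

/-- Coefficients of the square root of the simple factor of the discriminant. -/
noncomputable def discCoeff : ℕ → ℝ :=
  sqrtCoeff (38881899 / 36376450) (223434890721 / 1520535610000)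

/-- Coefficients, in the catalytic variable, of the generating function of two-stack sortable
permutations at `(zVal, qVal)`. -/
noncomputable def genCoeff : ℕ → ℝ
  | 0 => 0
  | c + 1 => (discCoeff (c + 3) - rVal * discCoeff (c + 2)) / (2 * zVal * qVal)

/-- The sequence `sVal - ∑_{j < b} genCoeff j`. -/
noncomputable def tailCoeff (b : ℕ) : ℝ := sVal - ∑ j ∈ Finset.range b, genCoeff j

theorem discCoeff_zero : discCoeff 0 = 1 := by simp [discCoeff, sqrtCoeff]

theorem discCoeff_one : discCoeff 1 = -(38881899 / 36376450) / 2 := by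
  simp [discCoeff, sqrtCoeff]

theorem discCoeff_add_two (m : ℕ) : discCoeff (m + 2) =
    (38881899 / 36376450 * (2 * m + 1) * discCoeff (m + 1)
      - 2 * (223434890721 / 1520535610000) * (m - 1) * discCoeff m) / (2 * (m + 2)) := by
  simp [discCoeff, sqrtCoeff]

theorem discCoeff_bounds (m : ℕ) : discCoeff (m + 2) < 0 ∧
    rVal * discCoeff (m + 2) ≤ discCoeff (m + 3) ∧
    discCoeff (m + 3) ≤ discCoeff (m + 2) / 2 := by
  induction m with
  | zero =>
    have h2 := discCoeff_add_two 0
    have h3 := discCoeff_add_two 1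
    rw [zero_add, zero_add, discCoeff_zero, discCoeff_one] at h2
    norm_num at h2 h3
    rw [h2] at h3
    rw [h2, h3, rVal]
    norm_num
  | succ m ih =>
    obtain ⟨h1, h2, h3⟩ := ih
    have h4 := discCoeff_add_two (m + 2)
    rw [show m + 2 + 2 = m + 4 by ring, show m + 2 + 1 = m + 3 by ring] at h4
    rw [show m + 1 + 2 = m + 3 by ring, show m + 1 + 3 = m + 4 by ring]
    have hm : (0 : ℝ) ≤ m := Nat.cast_nonneg m
    have h5 : discCoeff (m + 3) < 0 := by linarith
    push_cast at h4
    generalize discCoeff (m + 4) = x4 at *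
    generalize discCoeff (m + 3) = x3 at *
    generalize discCoeff (m + 2) = x2 at *
    generalize (m : ℝ) = y at *
    have hy : 0 < 2 * (y + 2 + 2) := by linarith
    rw [eq_div_iff hy.ne'] at h4
    unfold rVal at h2 ⊢
    refine ⟨h5, ?_, ?_⟩
    · have k1 : 0 ≤ (x3 - 3157 / 3481 * x2) * (y + 1) := mul_nonneg (by linarith) (by linarith)
      have k2 : 0 ≤ -x3 * y := mul_nonneg (by linarith) hm
      by_contra hcon
      have k3 : 0 < (3157 / 3481 * x3 - x4) * (2 * (y + 2 + 2)) := mul_pos (by linarith) hy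
      nlinarith
    · have k1 : 0 ≤ (x2 / 2 - x3) * (y + 1) := mul_nonneg (by linarith) (by linarith)
      have k2 : 0 ≤ -x3 * y := mul_nonneg (by linarith) hm
      by_contra hcon
      have k3 : 0 < (x4 - x3 / 2) * (2 * (y + 2 + 2)) := mul_pos (by linarith) hy
      nlinarith

theorem genCoeff_nonneg (c : ℕ) : 0 ≤ genCoeff c := by
  rcases c with _ | c
  · simp [genCoeff]
  · have := (discCoeff_bounds c).2.1
    rw [genCoeff]
    apply div_nonneg (by linarith)
    norm_num [zVal, qVal]

section GeneratingFunction
open PowerSeries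

theorem genCoeff_eq_disc :
    C (2 * zVal * qVal) * X ^ 2 * mk genCoeff =
      (X - 1) * (1 - C (zVal * (1 + qVal)) * X) + C (zVal * qVal * sVal) * X
        + (1 - C rVal * X) * mk discCoeff := by
  have e : (X - 1) * (1 - C (zVal * (1 + qVal)) * X) + C (zVal * qVal * sVal) * X
        + (1 - C rVal * X) * mk discCoeff
      = - 1 + C (1 + zVal * (1 + qVal) + zVal * qVal * sVal) * X
        - C (zVal * (1 + qVal)) * (X * X) + mk discCoeff - C rVal * (X * mk discCoeff) := by
    simp only [map_add, map_mul, map_one]; ring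
  have h2 := discCoeff_add_two 0
  rw [zero_add, zero_add, discCoeff_zero, discCoeff_one] at h2
  have hzq : 2 * zVal * qVal ≠ 0 := by norm_num [zVal, qVal]
  rw [e, mul_assoc, pow_two, mul_assoc X]
  ext m
  simp only [map_add, map_sub, map_neg, coeff_C_mul]
  rcases m with _ | _ | _ | m
  · simp [discCoeff_zero]
  · simp only [coeff_succ_X_mul, coeff_zero_X_mul, coeff_mk, coeff_one, discCoeff_one, coeff_X,
      discCoeff_zero, zero_add]
    norm_num [zVal, qVal, sVal, rVal]
  · simp only [coeff_succ_X_mul, coeff_mk, coeff_one, discCoeff_one, coeff_X, h2, zero_add,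
      genCoeff]
    norm_num [zVal, qVal, sVal, rVal]
  · simp only [coeff_succ_X_mul, coeff_mk, coeff_one, coeff_X, genCoeff]
    have hcancel : ∀ x : ℝ, 2 * zVal * qVal * (x / (2 * zVal * qVal)) = x :=
      fun x => by rw [mul_comm, div_mul_cancel₀ _ hzq]
    rw [hcancel]
    simp

theorem discCoeff_sq : (mk discCoeff) ^ 2 =
    1 - C (38881899 / 36376450) * X + C (223434890721 / 1520535610000) * X ^ 2 :=
  sqrtCoeff_sq _ _

theorem tailCoeff_eq : (X - 1) * mk tailCoeff = X * mk genCoeff - C sVal := by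
  ext m
  rcases m with _ | m
  · simp [sub_mul, tailCoeff]
  · simp [sub_mul, tailCoeff, coeff_succ_X_mul, Finset.sum_range_succ]

theorem genCoeff_functional_eq :
    mk genCoeff = C zVal * X * (1 + C (1 + qVal) * mk genCoeff
      + C qVal * mk genCoeff * mk tailCoeff) := by
  set G := mk genCoeff
  set V := mk tailCoeff
  set H := mk discCoeff
  have h1 : C (2 * zVal * qVal) * X ^ 2 * G = _ := genCoeff_eq_disc
  have h2 : H ^ 2 = _ := discCoeff_sq
  have h3 : (X - 1) * V = X * G - C sVal := tailCoeff_eq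
  set P : PowerSeries ℝ := (X - 1) * (1 - C (zVal * (1 + qVal)) * X) + C (zVal * qVal * sVal) * X
    with hP
  have hD : P ^ 2 - ((1 - C rVal * X) * H) ^ 2 =
      C (4 * zVal ^ 2 * qVal) * X ^ 3 * (X - 1) := by
    have c1 := congrArg (C (R := ℝ)) (show -2 * (1 + zVal * (1 + qVal) + zVal * qVal * sVal)
      + 2 * rVal + 38881899 / 36376450 = 0 by norm_num [zVal, qVal, sVal, rVal])
    have c2 := congrArg (C (R := ℝ)) (show (1 + zVal * (1 + qVal) + zVal * qVal * sVal) ^ 2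
      + 2 * (zVal * (1 + qVal)) - rVal ^ 2 - 2 * rVal * (38881899 / 36376450)
      - 223434890721 / 1520535610000 = 0 by norm_num [zVal, qVal, sVal, rVal])
    have c3 := congrArg (C (R := ℝ)) (show
      -2 * (1 + zVal * (1 + qVal) + zVal * qVal * sVal) * (zVal * (1 + qVal))
      + 38881899 / 36376450 * rVal ^ 2 + 2 * rVal * (223434890721 / 1520535610000)
      + 4 * zVal ^ 2 * qVal = 0 by norm_num [zVal, qVal, sVal, rVal])
    have c4 := congrArg (C (R := ℝ)) (show (zVal * (1 + qVal)) ^ 2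
      - rVal ^ 2 * (223434890721 / 1520535610000)
      - 4 * zVal ^ 2 * qVal = 0 by norm_num [zVal, qVal, sVal, rVal])
    rw [mul_pow, h2, hP]
    generalize (38881899 / 36376450 : ℝ) = a at *
    generalize (223434890721 / 1520535610000 : ℝ) = b at *
    simp only [map_mul, map_add, map_sub, map_one, map_pow, map_ofNat, map_neg, map_zero]
      at c1 c2 c3 c4 ⊢
    linear_combination X * c1 + X ^ 2 * c2 + X ^ 3 * c3 + X ^ 4 * c4
  have hne : C (4 * zVal * qVal) * X ^ 2 ≠ (0 : PowerSeries ℝ) := by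
    apply mul_ne_zero
    · rw [Ne, map_eq_zero_iff _ (C_injective)]
      norm_num [zVal, qVal]
    · exact pow_ne_zero _ X_ne_zero
  have hX : (X - 1 : PowerSeries ℝ) ≠ 0 := by
    intro h
    have := congrArg constantCoeff h
    simp at this
  have h4 : C (zVal * qVal) * X ^ 2 * G ^ 2 - G * P + C zVal * X * (X - 1) = 0 := by
    apply mul_left_cancel₀ hne
    have : (C (2 * zVal * qVal) * X ^ 2 * G - P) ^ 2 = ((1 - C rVal * X) * H) ^ 2 := by
      rw [h1]; ring
    rw [← this] at hD
    simp only [map_mul, map_pow, map_ofNat] at hD ⊢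
    linear_combination -hD
  apply mul_left_cancel₀ hX
  rw [hP] at h4
  simp only [map_mul, map_add, map_one] at h4 ⊢
  linear_combination -(C zVal * C qVal * X * G) * h3 - h4

theorem genCoeff_succ (c : ℕ) : genCoeff (c + 1) = zVal * ((if c = 0 then 1 else 0)
    + (1 + qVal) * genCoeff c
    + qVal * ∑ ij ∈ Finset.HasAntidiagonal.antidiagonal c, genCoeff ij.1 * tailCoeff ij.2) := by
  have h := congrArg (coeff (c + 1)) genCoeff_functional_eq
  rw [mul_assoc, mul_assoc, coeff_C_mul, coeff_succ_X_mul, map_add, map_add, coeff_C_mul,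
    coeff_C_mul, coeff_mul, coeff_one] at h
  simpa only [coeff_mk] using h

theorem sum_genCoeff_le (n : ℕ) : ∑ j ∈ Finset.range n, genCoeff j ≤ sVal := by
  have hr : 0 ≤ rVal ∧ rVal < 1 := by norm_num [rVal]
  have hneg : ∀ m, discCoeff (m + 2) < 0 := fun m => (discCoeff_bounds m).1
  have hgeo : ∀ m, |discCoeff (m + 2)| ≤ |discCoeff 2| * rVal ^ m := by
    intro m
    induction m with
    | zero => simp
    | succ m ih =>
      have := (discCoeff_bounds m).2.1
      rw [abs_of_neg (hneg _)] at ih ⊢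
      rw [show m + 1 + 2 = m + 3 by ring, pow_succ]
      nlinarith [hr.1]
  have hsum : Summable (fun m => ‖discCoeff m‖) := by
    rw [← summable_nat_add_iff 2]
    exact Summable.of_nonneg_of_le (fun _ => norm_nonneg _) hgeo
      ((summable_geometric_of_lt_one hr.1 hr.2).mul_left _)
  have hs : Summable discCoeff := hsum.of_norm
  have hsq : (∑' m, discCoeff m) * (∑' m, discCoeff m) = 118707122521 / 1520535610000 := by
    rw [tsum_mul_tsum_eq_tsum_sum_antidiagonal_of_summable_norm hsum hsum]
    have hc : ∀ m, ∑ ij ∈ Finset.HasAntidiagonal.antidiagonal m, discCoeff ij.1 * discCoeff ij.2 =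
        coeff m (1 - C (38881899 / 36376450) * X + C (223434890721 / 1520535610000) * (X * X)
          : PowerSeries ℝ) := by
      intro m
      rw [← pow_two, ← discCoeff_sq, pow_two, coeff_mul]
      simp only [coeff_mk]
    rw [tsum_congr hc, tsum_eq_sum (s := Finset.range 3)]
    · simp only [Finset.sum_range_succ, Finset.sum_range_zero, map_add, map_sub, coeff_C_mul]
      simp [coeff_one, coeff_X, coeff_zero_X_mul]
      norm_num
    · intro m hm
      obtain ⟨k, rfl⟩ : ∃ k, m = k + 3 := ⟨m - 3, by simp at hm; omega⟩
      simp only [map_add, map_sub, coeff_C_mul, coeff_one, coeff_X, coeff_succ_X_mul]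
      simp
  have hle : ∑' m, discCoeff m ≤ 344539 / 1233100 := by nlinarith
  have hmono : ∀ k, ∑ j ∈ Finset.range (k + 1), genCoeff j =
      (∑ j ∈ Finset.range k, (discCoeff (j + 3) - rVal * discCoeff (j + 2))) /
        (2 * zVal * qVal) := by
    intro k
    rw [Finset.sum_range_succ', Finset.sum_div]
    simp [genCoeff]
  have hsub : ∑ j ∈ Finset.range n, genCoeff j ≤ ∑ j ∈ Finset.range (n + 1), genCoeff j :=
    Finset.sum_le_sum_of_subset_of_nonneg (by simp) fun _ _ _ => genCoeff_nonneg _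
  refine hsub.trans ?_
  rw [hmono, div_le_iff₀ (by norm_num [zVal, qVal])]
  have hs2 := (summable_nat_add_iff 2).2 hs
  have hs3 := (summable_nat_add_iff 3).2 hs
  have h2 := discCoeff_add_two 0
  rw [zero_add, zero_add, discCoeff_zero, discCoeff_one] at h2
  have e2 := hs.sum_add_tsum_nat_add 2
  have e3 := hs.sum_add_tsum_nat_add 3
  simp only [Finset.sum_range_succ, Finset.sum_range_zero, discCoeff_zero, discCoeff_one, h2]
    at e2 e3
  calc _ ≤ ∑' j, (discCoeff (j + 3) - rVal * discCoeff (j + 2)) :=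
        (hs3.sub (hs2.mul_left _)).sum_le_tsum _
          fun j _ => by linarith [(discCoeff_bounds j).2.1]
    _ = ∑' j, discCoeff (j + 3) - rVal * ∑' j, discCoeff (j + 2) := by
        rw [hs3.tsum_sub (hs2.mul_left _), tsum_mul_left]
    _ ≤ _ := by
        norm_num [zVal, qVal, sVal, rVal] at e2 e3 ⊢
        linarith

theorem tailCoeff_nonneg (b : ℕ) : 0 ≤ tailCoeff b := sub_nonneg.2 (sum_genCoeff_le b)

end GeneratingFunction

theorem push_append_out (x : ℕ) (st o out : List ℕ) :
    push x st (o ++ out) = ((push x st out).1, o ++ (push x st out).2) := by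
  induction st generalizing out with
  | nil => rfl
  | cons t s ih =>
    simp only [push]
    split_ifs
    · rw [List.append_assoc, ih]
    · rfl

theorem push_stack_append {x n : ℕ} (h : x < n) (st out : List ℕ) :
    push x (st ++ [n]) out = ((push x st out).1 ++ [n], (push x st out).2) := by
  induction st generalizing out with
  | nil => simp [push, Nat.lt_asymm h]
  | cons t s ih =>
    simp only [push, List.cons_append]
    split_ifs
    · rw [ih]
    · rfl

theorem push_of_forall_lt {n : ℕ} (st out : List ℕ) (h : ∀ x ∈ st, x < n) :
    push n st out = ([n], out ++ st) := by
  induction st generalizing out with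
  | nil => simp [push]
  | cons t s ih =>
    simp only [List.mem_cons, forall_eq_or_imp] at h
    simp [push, h.1, ih _ h.2]

theorem mem_push {x y : ℕ} {st out : List ℕ} (h : y ∈ (push x st out).1) : y = x ∨ y ∈ st := by
  induction st generalizing out with
  | nil => simpa [push] using h
  | cons t s ih =>
    simp only [push] at h
    split_ifs at h
    · rcases ih h with h | h <;> simp [h]
    · simpa using h

theorem sortAux_append_out (l st o out : List ℕ) :
    sortAux l st (o ++ out) = o ++ sortAux l st out := by
  induction l generalizing st out with
  | nil => simp [sortAux]
  | cons x l ih => simp only [sortAux, push_append_out, ih]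

theorem sortAux_stack_append {n : ℕ} (l st out : List ℕ) (h : ∀ x ∈ l, x < n) :
    sortAux l (st ++ [n]) out = sortAux l st out ++ [n] := by
  induction l generalizing st out with
  | nil => simp [sortAux]
  | cons x l ih =>
    simp only [List.mem_cons, forall_eq_or_imp] at h
    simp only [sortAux, push_stack_append h.1, ih _ _ h.2]

theorem sortAux_append_cons {n : ℕ} (l r st out : List ℕ) (hl : ∀ x ∈ l, x < n)
    (hr : ∀ x ∈ r, x < n) (hst : ∀ x ∈ st, x < n) :
    sortAux (l ++ n :: r) st out = sortAux l st out ++ stackSort r ++ [n] := by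
  induction l generalizing st out with
  | nil =>
    have h1 := sortAux_stack_append r [] (out ++ st) hr
    have h2 := sortAux_append_out r [] (out ++ st) []
    simp only [List.nil_append, List.append_nil] at h1 h2
    simp only [List.nil_append, sortAux, push_of_forall_lt st out hst, h1, h2, stackSort]
  | cons x l ih =>
    simp only [List.mem_cons, forall_eq_or_imp] at hl
    simp only [List.cons_append, sortAux]
    apply ih _ _ hl.2
    intro y hy
    rcases mem_push hy with rfl | hy
    · exact hl.1
    · exact hst y hy

theorem stackSort_append_cons {n : ℕ} {l r : List ℕ} (hl : ∀ x ∈ l, x < n)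
    (hr : ∀ x ∈ r, x < n) :
    stackSort (l ++ n :: r) = stackSort l ++ stackSort r ++ [n] :=
  sortAux_append_cons l r [] [] hl hr (by simp)

theorem nodup_max_induction {P : List ℕ → Prop} (nil : P [])
    (split : ∀ l n r, (l ++ n :: r).Nodup → (∀ x ∈ l, x < n) → (∀ x ∈ r, x < n) →
      P l → P r → P (l ++ n :: r)) (p : List ℕ) (hp : p.Nodup) : P p := by
  induction h : p.length using Nat.strong_induction_on generalizing p with
  | _ N ih =>
    rcases eq_or_ne p [] with rfl | hne
    · exact nil
    · obtain ⟨n, hn, hmax⟩ := Finset.exists_max_image p.toFinset id (by simpa using hne)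
      simp only [List.mem_toFinset, id] at hn hmax
      obtain ⟨l, r, rfl⟩ := List.append_of_mem hn
      have hd := hp
      rw [List.nodup_middle, List.nodup_cons] at hd
      have hlt : ∀ x ∈ l ++ r, x < n := fun x hx =>
        lt_of_le_of_ne (hmax x (by simp at hx ⊢; tauto)) (by rintro rfl; exact hd.1 hx)
      have hlr := List.nodup_append.1 hd.2
      simp only [List.length_append, List.length_cons] at h
      exact split l n r hp (fun x hx => hlt x (by simp [hx])) (fun x hx => hlt x (by simp [hx]))
        (ih _ (by omega) l hlr.1 rfl) (ih _ (by omega) r hlr.2.1 rfl)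

theorem stackSort_perm {p : List ℕ} (hp : p.Nodup) : (stackSort p).Perm p := by
  refine nodup_max_induction (P := fun p => (stackSort p).Perm p) ?_ ?_ p hp
  · simp [stackSort, sortAux]
  · intro l n r _ hl hr ihl ihr
    rw [stackSort_append_cons hl hr, List.append_assoc]
    exact ihl.append ((List.perm_append_singleton _ _).trans (ihr.cons n))

/-- The number of ascents of a word. -/
def asc : List ℕ → ℕ
  | [] => 0
  | [_] => 0
  | x :: y :: l => (if x < y then 1 else 0) + asc (y :: l)

theorem asc_append_cons {n : ℕ} (l r : List ℕ) (hl : ∀ x ∈ l, x < n) (hr : ∀ x ∈ r, x < n) :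
    asc (l ++ n :: r) = asc l + (if l = [] then 0 else 1) + asc r := by
  induction l with
  | nil =>
    rcases r with _ | ⟨y, r⟩
    · simp [asc]
    · have : ¬ n < y := by have := hr y (by simp); omega
      simp [asc, this]
  | cons x l ih =>
    have hx := hl x (by simp)
    have ih := ih fun y hy => hl y (by simp [hy])
    rcases l with _ | ⟨y, l⟩
    · simp at ih
      simp [asc, hx, ih]
    · simp only [List.cons_append, asc] at ih ⊢
      rw [ih]
      simp
      omega

/-- The admissible postorder codes (existence of a left child, of a right child) of the decreasing
binary trees with postorder reading `σ`, when `σ` is preceded by the letter `x`. -/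
def postorderCodes : ℕ → List ℕ → Finset (List (Bool × Bool))
  | _, [] => {[]}
  | x, y :: σ => if x < y then
      (Finset.univ ×ˢ postorderCodes y σ).image fun hb => hb.1 :: hb.2
    else (postorderCodes y σ).image fun b => (false, false) :: b

/-- The weight `t` to the number of children, with `t = 33 / 14`. -/
noncomputable def childWeight (b : Bool × Bool) : ℝ :=
  (if b.1 then 33 / 14 else 1) * (if b.2 then 33 / 14 else 1)

theorem sum_postorderCodes (x : ℕ) (σ : List ℕ) :
    ∑ b ∈ postorderCodes x σ, (b.map childWeight).prod = qVal ^ asc (x :: σ) := by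
  induction σ generalizing x with
  | nil => simp [postorderCodes, asc]
  | cons y σ ih =>
    rw [postorderCodes, asc, pow_add]
    split_ifs
    · rw [Finset.sum_image (by rintro ⟨a, b⟩ _ ⟨c, d⟩ _; simp), Finset.sum_product]
      simp only [List.map_cons, List.prod_cons, ← Finset.mul_sum, ih, ← Finset.sum_mul]
      congr 1
      rw [Fintype.sum_prod_type]
      simp [childWeight, qVal]
      norm_num
    · rw [Finset.sum_image (by simp)]
      simp [childWeight, ih]

theorem postorderCodes_append {x : ℕ} {σ σ' : List ℕ} {b b' : List (Bool × Bool)}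
    (h : b ∈ postorderCodes x σ) (h' : ∀ y, b' ∈ postorderCodes y σ') :
    b ++ b' ∈ postorderCodes x (σ ++ σ') := by
  induction σ generalizing x b with
  | nil =>
    simp only [postorderCodes, Finset.mem_singleton] at h
    simpa [h] using h' x
  | cons y σ ih =>
    rw [List.cons_append, postorderCodes]
    rw [postorderCodes] at h
    split_ifs at h ⊢
    · simp only [Finset.mem_image, Finset.mem_product, Prod.exists] at h ⊢
      obtain ⟨c₁, c₂, d, hd, rfl⟩ := h
      exact ⟨c₁, c₂, d ++ b', ⟨hd.1, ih hd.2⟩, rfl⟩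
    · simp only [Finset.mem_image] at h ⊢
      obtain ⟨d, hd, rfl⟩ := h
      exact ⟨d ++ b', ih hd, rfl⟩

theorem postorderCodes_append_singleton {x n : ℕ} {σ : List ℕ} {b : List (Bool × Bool)}
    {h : Bool × Bool} (hb : b ∈ postorderCodes x σ) (hσ : ∀ y ∈ σ, y < n)
    (hh : σ = [] → h = (false, false)) : b ++ [h] ∈ postorderCodes x (σ ++ [n]) := by
  induction σ generalizing x b with
  | nil =>
    simp only [postorderCodes, Finset.mem_singleton] at hb
    subst hb
    rw [hh rfl]
    simp only [postorderCodes, List.nil_append]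
    split_ifs <;> simp
  | cons y σ ih =>
    have key : ∀ d, d ∈ postorderCodes y σ → d ++ [h] ∈ postorderCodes y (σ ++ [n]) := by
      intro d hd
      rcases eq_or_ne σ [] with rfl | hne
      · simp only [postorderCodes, Finset.mem_singleton] at hd
        subst hd
        rcases h with ⟨_ | _, _ | _⟩ <;> simp [postorderCodes, hσ y (by simp)]
      · exact ih hd (fun z hz => hσ z (by simp [hz])) (fun h0 => absurd h0 hne)
    rw [List.cons_append, postorderCodes]
    rw [postorderCodes] at hb
    split_ifs at hb ⊢
    · simp only [Finset.mem_image, Finset.mem_product, Prod.exists] at hb ⊢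
      obtain ⟨c₁, c₂, d, hd, rfl⟩ := hb
      exact ⟨c₁, c₂, d ++ [h], ⟨hd.1, key d hd.2⟩, rfl⟩
    · simp only [Finset.mem_image] at hb ⊢
      obtain ⟨d, hd, rfl⟩ := hb
      exact ⟨d ++ [h], key d hd, rfl⟩

/-- Pop an element from a stack of words if the flag is set. -/
def popIf (b : Bool) (st : List (List ℕ)) : List ℕ × List (List ℕ) :=
  if b then (st.headI, st.tail) else ([], st)

/-- Rebuild the inorder reading of a binary tree from its postorder reading and postorder code. -/
def decodePostorder : List (Bool × Bool) → List ℕ → List (List ℕ) → List (List ℕ)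
  | h :: b, x :: σ, st =>
      let R := popIf h.2 st
      let L := popIf h.1 R.2
      decodePostorder b σ ((L.1 ++ x :: R.1) :: L.2)
  | _, _, st => st

theorem exists_postorderCode {p : List ℕ} (hp : p.Nodup) :
    ∃ b : List (Bool × Bool), (∀ x, b ∈ postorderCodes x (stackSort p)) ∧
      (b.map childWeight).prod = (33 / 14 : ℝ) ^ (p.length - 1) ∧
      ∀ b' σ st, decodePostorder (b ++ b') (stackSort p ++ σ) st =
        decodePostorder b' σ (if p = [] then st else p :: st) := by
  refine nodup_max_induction (P := fun p => ∃ b : List (Bool × Bool),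
      (∀ x, b ∈ postorderCodes x (stackSort p)) ∧
      (b.map childWeight).prod = (33 / 14 : ℝ) ^ (p.length - 1) ∧
      ∀ b' σ st, decodePostorder (b ++ b') (stackSort p ++ σ) st =
        decodePostorder b' σ (if p = [] then st else p :: st)) ?_ ?_ p hp
  · exact ⟨[], by simp [stackSort, sortAux, postorderCodes]⟩
  · rintro l n r hlr hl hr ⟨bl, hbl, hwl, hdl⟩ ⟨br, hbr, hwr, hdr⟩
    have hnd := hlr
    rw [List.nodup_middle, List.nodup_cons, List.nodup_append] at hnd
    have pl := stackSort_perm hnd.2.1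
    have pr := stackSort_perm hnd.2.2.1
    refine ⟨bl ++ br ++ [(decide (l ≠ []), decide (r ≠ []))], ?_, ?_, ?_⟩
    · intro x
      rw [stackSort_append_cons hl hr]
      apply postorderCodes_append_singleton (postorderCodes_append (hbl x) hbr)
      · intro y hy
        rcases List.mem_append.1 hy with hy | hy
        · exact hl y (pl.mem_iff.1 hy)
        · exact hr y (pr.mem_iff.1 hy)
      · intro h0
        rw [List.append_eq_nil_iff] at h0
        rw [h0.1] at pl
        rw [h0.2] at pr
        simp [pl.nil_eq.symm, pr.nil_eq.symm]
    · simp only [List.map_append, List.prod_append, hwl, hwr]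
      rcases l with _ | ⟨y, l⟩ <;> rcases r with _ | ⟨y', r⟩ <;> simp [childWeight] <;> ring
    · intro b' σ st
      rw [stackSort_append_cons hl hr]
      simp only [List.append_assoc]
      rw [hdl, hdr]
      simp only [List.cons_append, List.nil_append, decodePostorder]
      rcases l with _ | ⟨y, l⟩ <;> rcases r with _ | ⟨y', r⟩ <;> simp [popIf]

theorem card_preimage_le (σ : List ℕ) (Y : Finset (List ℕ))
    (hY : ∀ p ∈ Y, p.Nodup ∧ stackSort p = σ) :
    (Y.card : ℝ) * (33 / 14 : ℝ) ^ (σ.length - 1) ≤ qVal ^ asc σ := by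
  classical
  obtain ⟨x, hx⟩ : ∃ x, asc (x :: σ) = asc σ := by
    rcases σ with _ | ⟨y, σ⟩
    · exact ⟨0, rfl⟩
    · exact ⟨y, by simp [asc]⟩
  rw [← hx, ← sum_postorderCodes]
  have h : ∀ p : Y, ∃ b : List (Bool × Bool), b ∈ postorderCodes x σ ∧
      (b.map childWeight).prod = (33 / 14 : ℝ) ^ (σ.length - 1) ∧
      decodePostorder b σ [] = if (p : List ℕ) = [] then [] else [(p : List ℕ)] := by
    rintro ⟨p, hp⟩
    obtain ⟨hn, rfl⟩ := hY p hp
    obtain ⟨b, h1, h2, h3⟩ := exists_postorderCode hn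
    refine ⟨b, h1 x, by rw [h2, (stackSort_perm hn).length_eq], ?_⟩
    simpa [decodePostorder] using h3 [] [] []
  choose f hf using h
  have hinj : Function.Injective f := by
    intro p p' hpp
    have h1 := (hf p).2.2
    have h2 := (hf p').2.2
    rw [hpp, h2] at h1
    apply Subtype.ext
    split_ifs at h1 with e1 e2 e2
    · rw [e1, e2]
    · simpa using h1.symm
  have hpos : ∀ b : List (Bool × Bool), 0 ≤ (b.map childWeight).prod := by
    intro b
    apply List.prod_nonneg
    simp only [List.mem_map, forall_exists_index, and_imp]
    rintro _ c _ rfl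
    unfold childWeight
    positivity
  calc (Y.card : ℝ) * (33 / 14 : ℝ) ^ (σ.length - 1)
      = ∑ p : Y, ((f p).map childWeight).prod := by simp [(hf _).2.1]
    _ = ∑ b ∈ Finset.univ.image f, (b.map childWeight).prod :=
        (Finset.sum_image (f := fun b : List (Bool × Bool) => (b.map childWeight).prod)
          fun _ _ _ _ h => hinj h).symm
    _ ≤ _ := Finset.sum_le_sum_of_subset_of_nonneg
        (by intro b hb; obtain ⟨p, -, rfl⟩ := Finset.mem_image.1 hb; exact (hf p).1)
        fun b _ _ => hpos b

/-- Binary trees whose internal nodes carry a natural number, used to encode the words `σ` for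
which `stackSort σ` avoids `231`. -/
inductive SplitTree where
  | nil : SplitTree
  | node (L R : SplitTree) (j : ℕ) : SplitTree

namespace SplitTree

/-- The number of internal nodes. -/
def size : SplitTree → ℕ
  | nil => 0
  | node L R _ => L.size + R.size + 1

/-- The positions at which the stack-sorted word can be cut into small and large letters. -/
def cuts : SplitTree → Finset ℕ
  | nil => {0}
  | node L R j => (L.cuts.erase L.size ∪ (R.cuts.filter (j ≤ ·)).image (L.size + ·)) ∪
      {L.size + R.size + 1}

/-- The number of proper cuts. -/
def rank (T : SplitTree) : ℕ := T.cuts.card - 1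

/-- The number of cuts at or after position `j`. -/
def tailCuts (T : SplitTree) (j : ℕ) : ℕ := (T.cuts.filter (j ≤ ·)).card

/-- Every label is a cut of the right subtree, and is `0` if the left subtree is empty. -/
def Valid : SplitTree → Prop
  | nil => True
  | node L R j => L.Valid ∧ R.Valid ∧ j ∈ R.cuts ∧ (L = nil → j = 0)

open Classical in
/-- The weight of a tree: `zVal` to the size times `qVal` to the number of left children. -/
noncomputable def weight : SplitTree → ℝ
  | nil => 1
  | node L R _ => zVal * (if L = nil then 1 else qVal) * L.weight * R.weight

theorem le_size_of_mem_cuts {T : SplitTree} {m : ℕ} (h : m ∈ T.cuts) : m ≤ T.size := by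
  induction T generalizing m with
  | nil => simpa [cuts, size] using h
  | node L R j ihL ihR =>
    simp only [cuts, Finset.mem_union, Finset.mem_erase, Finset.mem_image, Finset.mem_filter,
      Finset.mem_singleton] at h
    simp only [size]
    rcases h with (⟨-, h⟩ | ⟨k, ⟨hk, -⟩, rfl⟩) | rfl
    · have := ihL h; omega
    · have := ihR hk; omega
    · exact le_rfl

theorem size_mem_cuts (T : SplitTree) : T.size ∈ T.cuts := by
  cases T <;> simp [cuts, size]

theorem card_cuts (T : SplitTree) : T.cuts.card = T.rank + 1 :=
  (Nat.sub_add_cancel (Finset.card_pos.2 ⟨_, T.size_mem_cuts⟩)).symm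

theorem rank_node (L R : SplitTree) (j : ℕ) : (node L R j).rank = L.rank + R.tailCuts j := by
  have h1 : Disjoint (L.cuts.erase L.size) ((R.cuts.filter (j ≤ ·)).image (L.size + ·)) := by
    rw [Finset.disjoint_left]
    intro m hm hm'
    simp only [Finset.mem_erase, Finset.mem_image] at hm hm'
    obtain ⟨k, -, rfl⟩ := hm'
    have := le_size_of_mem_cuts hm.2
    omega
  have h2 : Disjoint (L.cuts.erase L.size ∪ (R.cuts.filter (j ≤ ·)).image (L.size + ·))
      {L.size + R.size + 1} := by
    rw [Finset.disjoint_singleton_right]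
    simp only [Finset.mem_union, Finset.mem_erase, Finset.mem_image, Finset.mem_filter]
    rintro (⟨-, h⟩ | ⟨k, ⟨h, -⟩, hk⟩)
    · have := le_size_of_mem_cuts h; omega
    · have := le_size_of_mem_cuts h; omega
  rw [rank, cuts, Finset.card_union_of_disjoint h2, Finset.card_union_of_disjoint h1,
    Finset.card_erase_of_mem L.size_mem_cuts,
    Finset.card_image_of_injective _ (add_right_injective _)]
  simp [rank, tailCuts]

theorem rank_nil : nil.rank = 0 := rfl

theorem tailCuts_zero (T : SplitTree) : T.tailCuts 0 = T.rank + 1 := by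
  simp [tailCuts, card_cuts]

theorem tailCuts_le (T : SplitTree) (j : ℕ) : T.tailCuts j ≤ T.rank + 1 := by
  rw [← card_cuts]
  exact Finset.card_filter_le _ _

theorem tailCuts_pos (T : SplitTree) {j : ℕ} (hj : j ∈ T.cuts) : 0 < T.tailCuts j :=
  Finset.card_pos.2 ⟨j, by simp [hj]⟩

theorem tailCuts_injOn (T : SplitTree) : Set.InjOn T.tailCuts T.cuts := by
  have key : ∀ i ∈ T.cuts, ∀ j, i < j → T.tailCuts j < T.tailCuts i := by
    intro i hi j hij
    apply Finset.card_lt_card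
    rw [Finset.ssubset_iff_of_subset]
    · exact ⟨i, by simp [hi], by simp [hij]⟩
    · intro k
      simp only [Finset.mem_filter]
      exact fun h => ⟨h.1, by omega⟩
  intro i hi j hj h
  rcases lt_trichotomy i j with h' | h' | h'
  · have := key i hi j h'; omega
  · exact h'
  · have := key j hj i h'; omega

theorem weight_nonneg (T : SplitTree) : 0 ≤ T.weight := by
  induction T with
  | nil => simp [weight]
  | node L R j ihL ihR =>
    have hz : 0 ≤ zVal := by unfold zVal; norm_num
    have hq : 0 ≤ qVal := by unfold qVal; norm_num
    unfold weight
    split_ifs <;> positivity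

open Classical in
/-- The valid nonempty trees of height at most `N`. -/
noncomputable def trees : ℕ → Finset SplitTree
  | 0 => ∅
  | N + 1 => (({node nil nil 0} ∪ (trees N).image fun L => node L nil 0) ∪
      (trees N).image fun R => node nil R 0) ∪
      (trees N).biUnion fun L => (trees N).biUnion fun R => R.cuts.image fun j => node L R j

theorem mem_trees {T : SplitTree} (hT : T.Valid) (hne : T ≠ nil) {N : ℕ} (hN : T.size ≤ N) :
    T ∈ trees N := by
  induction T generalizing N with
  | nil => exact absurd rfl hne
  | node L R j ihL ihR =>
    obtain ⟨hL, hR, hj, hj0⟩ := hT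
    obtain ⟨N, rfl⟩ : ∃ M, N = M + 1 := ⟨N - 1, by simp only [size] at hN; omega⟩
    simp only [size] at hN
    simp only [trees, Finset.mem_union, Finset.mem_singleton, Finset.mem_image, Finset.mem_biUnion]
    by_cases hLn : L = nil
    · obtain rfl := hj0 hLn
      subst hLn
      by_cases hRn : R = nil
      · simp [hRn]
      · exact Or.inl (Or.inr ⟨R, ihR hR hRn (by omega), rfl⟩)
    · by_cases hRn : R = nil
      · subst hRn
        simp only [cuts, Finset.mem_singleton] at hj
        subst hj
        exact Or.inl (Or.inl (Or.inr ⟨L, ihL hL hLn (by omega), rfl⟩))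
      · exact Or.inr ⟨L, ihL hL hLn (by omega), R, ihR hR hRn (by omega), j, hj, rfl⟩

theorem ne_nil_of_mem_trees {T : SplitTree} {N : ℕ} (hT : T ∈ trees N) : T ≠ nil := by
  rintro rfl
  cases N <;> simp [trees] at hT

theorem rank_ne_zero_of_mem_trees {T : SplitTree} {N : ℕ} (hT : T ∈ trees N) : T.rank ≠ 0 := by
  rcases N with _ | N
  · simp [trees] at hT
  · simp only [trees, Finset.mem_union, Finset.mem_singleton, Finset.mem_image,
      Finset.mem_biUnion] at hT
    rcases hT with ((rfl | ⟨L, -, rfl⟩) | ⟨R, -, rfl⟩) | ⟨L, -, R, -, j, hj, rfl⟩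
    · simp [rank_node, tailCuts_zero]
    · simp [rank_node, tailCuts_zero]
    · simp [rank_node, tailCuts_zero]
    · have := R.tailCuts_pos hj
      rw [rank_node]
      omega

theorem sum_union_le_add {α : Type*} [DecidableEq α] {f : α → ℝ} (hf : ∀ a, 0 ≤ f a)
    (s t : Finset α) : ∑ a ∈ s ∪ t, f a ≤ ∑ a ∈ s, f a + ∑ a ∈ t, f a := by
  rw [← Finset.sum_union_inter]
  exact le_add_of_nonneg_right (Finset.sum_nonneg fun a _ => hf a)

theorem sum_biUnion_le_sum {α β : Type*} [DecidableEq α] {f : α → ℝ} (hf : ∀ a, 0 ≤ f a)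
    (s : Finset β) (t : β → Finset α) :
    ∑ a ∈ s.biUnion t, f a ≤ ∑ b ∈ s, ∑ a ∈ t b, f a := by
  classical
  induction s using Finset.induction_on with
  | empty => simp
  | insert b s hb ih =>
    rw [Finset.biUnion_insert, Finset.sum_insert hb]
    exact (sum_union_le_add hf _ _).trans (by gcongr)

theorem sum_image_le_sum {α β : Type*} [DecidableEq α] {f : α → ℝ} (hf : ∀ a, 0 ≤ f a)
    (s : Finset β) (t : β → α) : ∑ a ∈ s.image t, f a ≤ ∑ b ∈ s, f (t b) := by
  rw [← Finset.biUnion_singleton]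
  simpa using sum_biUnion_le_sum hf s fun b => {t b}

/-- If the level sums of a weight function are bounded by `genCoeff`, then its upper sums are
bounded by `tailCoeff`. -/
theorem sum_le_tailCoeff (S : Finset SplitTree)
    (hS : ∀ c, (∑ T ∈ S, if T.rank = c then T.weight else 0) ≤ genCoeff c) (b : ℕ) :
    (∑ T ∈ S, if b ≤ T.rank then T.weight else 0) ≤ tailCoeff b := by
  set M := S.sup rank + 1 with hM
  have hlt : ∀ T ∈ S, T.rank < M := fun T hT => Nat.lt_succ_of_le (Finset.le_sup hT)
  have h1 : (∑ T ∈ S, if b ≤ T.rank then T.weight else 0) =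
      ∑ c ∈ Finset.Ico b M, ∑ T ∈ S, if T.rank = c then T.weight else 0 := by
    rw [Finset.sum_comm]
    refine Finset.sum_congr rfl fun T hT => ?_
    rw [Finset.sum_ite_eq]
    simp [hlt T hT]
  rw [h1]
  refine (Finset.sum_le_sum fun c _ => hS c).trans ?_
  rcases le_total b M with h | h
  · rw [Finset.sum_Ico_eq_sub _ h, tailCoeff]
    linarith [sum_genCoeff_le M]
  · rw [Finset.Ico_eq_empty_of_le h]
    simpa using tailCoeff_nonneg b

theorem sum_trees_le (N c : ℕ) :
    (∑ T ∈ trees N, if T.rank = c then T.weight else 0) ≤ genCoeff c := by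
  classical
  induction N generalizing c with
  | zero => simpa [trees] using genCoeff_nonneg c
  | succ N ih =>
    have hz : 0 ≤ zVal := by unfold zVal; norm_num
    have hq : 0 ≤ qVal := by unfold qVal; norm_num
    have hf : ∀ T : SplitTree, 0 ≤ if T.rank = c then T.weight else 0 := by
      intro T
      split_ifs
      exacts [T.weight_nonneg, le_rfl]
    rcases c with _ | c
    · refine (Finset.sum_eq_zero fun T hT => if_neg (rank_ne_zero_of_mem_trees hT)).trans_le ?_
      exact genCoeff_nonneg 0
    rw [genCoeff_succ, trees]
    refine (sum_union_le_add hf _ _).trans ?_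
    refine (add_le_add ((sum_union_le_add hf _ _).trans (add_le_add ((sum_union_le_add hf _ _).trans
      (add_le_add le_rfl (sum_image_le_sum hf _ _))) (sum_image_le_sum hf _ _)))
      ((sum_biUnion_le_sum hf _ _).trans (Finset.sum_le_sum fun L _ =>
        (sum_biUnion_le_sum hf _ _).trans (Finset.sum_le_sum fun R _ =>
          sum_image_le_sum hf _ _)))).trans ?_
    have e1 : (∑ T ∈ ({node nil nil 0} : Finset SplitTree),
        if T.rank = c + 1 then T.weight else 0) = zVal * if c = 0 then 1 else 0 := by
      simp [rank_node, rank_nil, tailCuts_zero, weight, eq_comm]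
    have e2 : (∑ L ∈ trees N, if (node L nil 0).rank = c + 1 then (node L nil 0).weight else 0)
        ≤ zVal * (qVal * genCoeff c) := by
      refine le_trans (le_of_eq ?_) (mul_le_mul_of_nonneg_left
        (mul_le_mul_of_nonneg_left (ih c) hq) hz)
      rw [Finset.mul_sum, Finset.mul_sum]
      refine Finset.sum_congr rfl fun L hL => ?_
      simp [rank_node, rank_nil, tailCuts_zero, weight, ne_nil_of_mem_trees hL]
      ring_nf
    have e3 : (∑ R ∈ trees N, if (node nil R 0).rank = c + 1 then (node nil R 0).weight else 0)
        ≤ zVal * genCoeff c := by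
      refine le_trans (le_of_eq ?_) (mul_le_mul_of_nonneg_left (ih c) hz)
      rw [Finset.mul_sum]
      refine Finset.sum_congr rfl fun R hR => ?_
      simp [rank_node, rank_nil, tailCuts_zero, weight]
    have e4 : (∑ L ∈ trees N, ∑ R ∈ trees N, ∑ j ∈ R.cuts,
        if (node L R j).rank = c + 1 then (node L R j).weight else 0) ≤
        zVal * (qVal * ∑ ij ∈ Finset.HasAntidiagonal.antidiagonal c,
          genCoeff ij.1 * tailCoeff ij.2) := by
      have s1 : ∀ L ∈ trees N, ∀ R ∈ trees N, (∑ j ∈ R.cuts,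
          if (node L R j).rank = c + 1 then (node L R j).weight else 0) ≤
          ∑ ij ∈ Finset.HasAntidiagonal.antidiagonal c, zVal * qVal *
            ((if L.rank = ij.1 then L.weight else 0) * if ij.2 ≤ R.rank then R.weight else 0) := by
        intro L hL R hR
        have hnn : ∀ ij ∈ Finset.HasAntidiagonal.antidiagonal c, 0 ≤ zVal * qVal *
            ((if L.rank = ij.1 then L.weight else 0) *
              if ij.2 ≤ R.rank then R.weight else 0) := by
          intro ij _
          have := L.weight_nonneg
          have := R.weight_nonneg
          split_ifs <;> positivity
        by_cases hj : ∃ j ∈ R.cuts, L.rank + R.tailCuts j = c + 1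
        · obtain ⟨j, hj, hjc⟩ := hj
          rw [Finset.sum_eq_single_of_mem j hj]
          · have h1 := R.tailCuts_pos hj
            have h2 := R.tailCuts_le j
            refine le_trans (le_of_eq ?_) (Finset.single_le_sum hnn
              (Finset.HasAntidiagonal.mem_antidiagonal (a := (L.rank, R.tailCuts j - 1)).2
                (show L.rank + (R.tailCuts j - 1) = c by omega)))
            rw [rank_node, if_pos hjc, if_pos rfl, if_pos (by omega), weight,
              if_neg (ne_nil_of_mem_trees hL)]
            ring
          · intro i hi hij
            rw [rank_node, if_neg]
            intro h
            exact hij (R.tailCuts_injOn hi hj (by omega))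
        · push Not at hj
          rw [Finset.sum_eq_zero fun j hj' => by rw [rank_node, if_neg (hj j hj')]]
          exact Finset.sum_nonneg hnn
      calc _ ≤ ∑ L ∈ trees N, ∑ R ∈ trees N, ∑ ij ∈ Finset.HasAntidiagonal.antidiagonal c,
            zVal * qVal * ((if L.rank = ij.1 then L.weight else 0) *
              if ij.2 ≤ R.rank then R.weight else 0) :=
            Finset.sum_le_sum fun L hL => Finset.sum_le_sum fun R hR => s1 L hL R hR
        _ = zVal * (qVal * ∑ ij ∈ Finset.HasAntidiagonal.antidiagonal c,
            (∑ L ∈ trees N, if L.rank = ij.1 then L.weight else 0) *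
              ∑ R ∈ trees N, if ij.2 ≤ R.rank then R.weight else 0) := by
            rw [← mul_assoc, Finset.mul_sum,
              Finset.sum_congr rfl fun L _ => Finset.sum_comm, Finset.sum_comm]
            refine Finset.sum_congr rfl fun ij _ => ?_
            rw [Finset.sum_mul_sum, Finset.mul_sum]
            exact Finset.sum_congr rfl fun L _ => (Finset.mul_sum _ _ _).symm
        _ ≤ _ := by
            gcongr with ij hij
            · exact Finset.sum_nonneg fun R _ => by
                split_ifs
                exacts [R.weight_nonneg, le_rfl]
            · exact genCoeff_nonneg _
            · exact ih _
            · exact sum_le_tailCoeff _ ih _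
    rw [e1]
    linarith [e2, e3, e4]

theorem sum_weight_trees_le (N : ℕ) : ∑ T ∈ trees N, T.weight ≤ sVal := by
  simpa [tailCoeff] using sum_le_tailCoeff _ (sum_trees_le N) 0

/-- `T` encodes the word `σ`: the root corresponds to the maximal letter, and a label `j` says that
all the letters `l` on its left except for their maximum are smaller than the letters `r` on its
right, and this maximum exceeds exactly `j` letters of `r`. -/
def IsCode : SplitTree → List ℕ → Prop
  | nil, σ => σ = []
  | node L R j, σ => ∃ l n r, σ = l ++ n :: r ∧ L.IsCode l ∧ R.IsCode r ∧
      (∀ x ∈ l, x < n) ∧ (∀ x ∈ r, x < n) ∧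
      (l ≠ [] → ∃ a ∈ l, (∀ x ∈ l, x ≠ a → x < a) ∧ (∀ x ∈ l, x ≠ a → ∀ y ∈ r, x < y) ∧
        (r.toFinset.filter (· < a)).card = j)

theorem IsCode.length_eq {T : SplitTree} {σ : List ℕ} (h : T.IsCode σ) : σ.length = T.size := by
  induction T generalizing σ with
  | nil => simp_all [IsCode, size]
  | node L R j ihL ihR =>
    obtain ⟨l, n, r, rfl, hL, hR, -⟩ := h
    simp [size, ihL hL, ihR hR]
    omega

theorem eq_of_lower_of_card_eq {X A A' : Finset ℕ} (hX : A ⊆ X) (hX' : A' ⊆ X)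
    (h : ∀ x ∈ A, ∀ y ∈ X, y ∉ A → x < y) (h' : ∀ x ∈ A', ∀ y ∈ X, y ∉ A' → x < y)
    (hc : A.card = A'.card) : A = A' := by
  refine Finset.eq_of_subset_of_card_le (fun x hx => ?_) hc.ge
  by_contra hx'
  obtain ⟨y, hy', hy⟩ : ∃ y ∈ A', y ∉ A := by
    by_contra! hs
    exact hx' (Finset.eq_of_subset_of_card_le hs hc.le ▸ hx)
  have h1 := h x hx y (hX' hy') hy
  have h2 := h' y hy' x (hX hx) hx'
  omega

theorem eq_of_card_filter_lt_eq {X : Finset ℕ} {a a' : ℕ} (ha : a ∈ X) (ha' : a' ∈ X)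
    (h : (X.filter (· < a)).card = (X.filter (· < a')).card) : a = a' := by
  have key : ∀ b ∈ X, ∀ c, b < c → (X.filter (· < b)).card < (X.filter (· < c)).card := by
    intro b hb c hbc
    apply Finset.card_lt_card
    rw [Finset.ssubset_iff_of_subset]
    · exact ⟨b, by simp [hb, hbc], by simp⟩
    · intro x
      simp only [Finset.mem_filter]
      exact fun hx => ⟨hx.1, hx.2.trans hbc⟩
  rcases lt_trichotomy a a' with hlt | heq | hlt
  · have := key a ha a' hlt; omega
  · exact heq
  · have := key a' ha' a hlt; omega

theorem IsCode.unique {T : SplitTree} {σ σ' : List ℕ} (h : T.IsCode σ) (h' : T.IsCode σ')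
    (hp : σ.Perm σ') (hn : σ.Nodup) : σ = σ' := by
  induction T generalizing σ σ' with
  | nil => exact Eq.trans h (Eq.symm h')
  | node L R j ihL ihR =>
    obtain ⟨l, n, r, rfl, hL, hR, hln, hrn, hj⟩ := h
    obtain ⟨l', n', r', rfl, hL', hR', hln', hrn', hj'⟩ := h'
    have hn' := hp.nodup_iff.1 hn
    obtain rfl : n = n' := by
      have h1 : n ∈ l' ++ n' :: r' := hp.mem_iff.1 (by simp)
      have h2 : n' ∈ l ++ n :: r := hp.mem_iff.2 (by simp)
      simp only [List.mem_append, List.mem_cons] at h1 h2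
      rcases h1 with h1 | h1 | h1
      · rcases h2 with h2 | h2 | h2
        · have := hln' _ h1; have := hln _ h2; omega
        · exact h2.symm
        · have := hln' _ h1; have := hrn _ h2; omega
      · exact h1
      · rcases h2 with h2 | h2 | h2
        · have := hrn' _ h1; have := hln _ h2; omega
        · exact h2.symm
        · have := hrn' _ h1; have := hrn _ h2; omega
    have hlr : (l ++ r).Perm (l' ++ r') :=
      (List.perm_cons n).1 (List.perm_middle.symm.trans (hp.trans List.perm_middle))
    rw [List.nodup_middle, List.nodup_cons] at hn hn'
    obtain ⟨hnl, hnr, hdisj⟩ := List.nodup_append.1 hn.2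
    obtain ⟨hnl', hnr', hdisj'⟩ := List.nodup_append.1 hn'.2
    have hlen : l.length = l'.length := hL.length_eq.trans hL'.length_eq.symm
    have hll : l.toFinset = l'.toFinset := by
      rcases eq_or_ne l [] with rfl | hne
      · rw [List.length_eq_zero_iff.1 hlen.symm]
      · have hne' : l' ≠ [] := by
          rintro rfl
          exact hne (List.length_eq_zero_iff.1 hlen)
        obtain ⟨a, ha, hal, har, hac⟩ := hj hne
        obtain ⟨a', ha', hal', har', hac'⟩ := hj' hne'
        have hX : ∀ y, y ∈ l ∨ y ∈ r ↔ y ∈ l' ∨ y ∈ r' := fun y => by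
          simpa using hlr.mem_iff (a := y)
        have hA : l.toFinset.erase a = l'.toFinset.erase a' := by
          apply eq_of_lower_of_card_eq (X := l.toFinset ∪ r.toFinset)
          · intro x
            simp
            tauto
          · intro x
            simp [hX]
            tauto
          · intro x hx y hy hyA
            simp only [Finset.mem_erase, List.mem_toFinset, Finset.mem_union, not_and'] at hx hy hyA
            rcases hy with hy | hy
            · rw [not_not.1 (hyA hy)]
              exact hal x hx.2 hx.1
            · exact har x hx.2 hx.1 y hy
          · intro x hx y hy hyA
            simp only [Finset.mem_erase, List.mem_toFinset, Finset.mem_union, hX, not_and']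
              at hx hy hyA
            rcases hy with hy | hy
            · rw [not_not.1 (hyA hy)]
              exact hal' x hx.2 hx.1
            · exact har' x hx.2 hx.1 y hy
          · rw [Finset.card_erase_of_mem (by simpa), Finset.card_erase_of_mem (by simpa),
              List.toFinset_card_of_nodup hnl, List.toFinset_card_of_nodup hnl', hlen]
        have hXX : l.toFinset ∪ r.toFinset = l'.toFinset ∪ r'.toFinset := by
          ext y
          simpa using hX y
        have hcount : ∀ (l r : List ℕ) (a : ℕ), a ∈ l → (∀ x ∈ l, ∀ y ∈ r, x ≠ y) →
            r.toFinset.filter (· < a) =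
              ((l.toFinset ∪ r.toFinset) \ l.toFinset.erase a).filter (· < a) := by
          intro l r a ha hd
          ext y
          simp only [Finset.mem_filter, List.mem_toFinset, Finset.mem_sdiff, Finset.mem_union,
            Finset.mem_erase, not_and]
          constructor
          · rintro ⟨h1, h2⟩
            exact ⟨⟨Or.inr h1, fun _ h3 => hd y h3 y h1 rfl⟩, h2⟩
          · rintro ⟨⟨h1, h3⟩, h2⟩
            exact ⟨h1.resolve_left (h3 h2.ne), h2⟩
        have haa : a = a' := by
          apply eq_of_card_filter_lt_eq (X := (l.toFinset ∪ r.toFinset) \ l.toFinset.erase a)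
          · simp [ha]
          · rw [hA, hXX]
            simp [ha']
          · rw [← hcount l r a ha hdisj, hA, hXX, ← hcount l' r' a' ha' hdisj', hac, hac']
        rw [← Finset.insert_erase (List.mem_toFinset.2 ha), hA, haa,
          Finset.insert_erase (List.mem_toFinset.2 ha')]
    have hpl : l.Perm l' := List.perm_of_nodup_nodup_toFinset_eq hnl hnl' hll
    have hpr : r.Perm r' := (List.perm_append_left_iff l).1 (hlr.trans (hpl.symm.append_right r'))
    rw [ihL hL hL' hpl hnl, ihR hR hR' hpr hnr]

end SplitTree

/-- The word avoids the pattern `231`. -/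
def Avoids231 (w : List ℕ) : Prop := ∀ b c a, List.Sublist [b, c, a] w → a < b → b < c → False

theorem Avoids231.sublist {v w : List ℕ} (h : Avoids231 w) (hvw : List.Sublist v w) :
    Avoids231 v := fun b c a hs => h b c a (hs.trans hvw)

/-- The first `m` letters of `w` are smaller than the other ones. -/
def IsCut (w : List ℕ) (m : ℕ) : Prop :=
  m ≤ w.length ∧ ∀ x ∈ w.take m, ∀ y ∈ w.drop m, x < y

theorem isCut_append_of_le {u v : List ℕ} {m : ℕ} (hm : m ≤ u.length) :
    IsCut (u ++ v) m ↔ IsCut u m ∧ ∀ x ∈ u.take m, ∀ y ∈ v, x < y := by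
  simp only [IsCut, List.take_append_of_le_length hm, List.drop_append_of_le_length hm,
    List.length_append, List.mem_append]
  constructor
  · rintro ⟨-, h⟩
    exact ⟨⟨hm, fun x hx y hy => h x hx y (Or.inl hy)⟩, fun x hx y hy => h x hx y (Or.inr hy)⟩
  · rintro ⟨⟨-, h⟩, h'⟩
    exact ⟨by omega, fun x hx y hy => hy.elim (h x hx y) (h' x hx y)⟩

theorem isCut_append_add {u v : List ℕ} {k : ℕ} :
    IsCut (u ++ v) (u.length + k) ↔ IsCut v k ∧ ∀ x ∈ u, ∀ y ∈ v.drop k, x < y := by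
  simp only [IsCut, List.take_length_add_append, List.drop_length_add_append,
    List.length_append, List.mem_append]
  constructor
  · rintro ⟨h0, h⟩
    exact ⟨⟨by omega, fun x hx y hy => h x (Or.inr hx) y hy⟩, fun x hx y hy => h x (Or.inl hx) y hy⟩
  · rintro ⟨⟨h0, h⟩, h'⟩
    exact ⟨by omega, fun x hx y hy => hx.elim (fun hx => h' x hx y hy) fun hx => h x hx y hy⟩

theorem isCut_append_singleton {w : List ℕ} {n m : ℕ} (hn : ∀ x ∈ w, x < n) :
    IsCut (w ++ [n]) m ↔ IsCut w m ∨ m = w.length + 1 := by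
  rcases le_or_gt m w.length with h | h
  · rw [isCut_append_of_le h]
    constructor
    · exact fun h' => Or.inl h'.1
    · rintro (h' | h')
      · refine ⟨h', fun x hx y hy => ?_⟩
        rw [List.mem_singleton.1 hy]
        exact hn x (List.mem_of_mem_take hx)
      · omega
  · constructor
    · rintro ⟨h1, -⟩
      simp at h1
      omega
    · rintro (⟨h1, -⟩ | rfl)
      · omega
      · exact ⟨by simp, by simp⟩

theorem isCut_zero (w : List ℕ) : IsCut w 0 := by simp [IsCut]

theorem exists_stackSort_eq_append_singleton {p : List ℕ} (hp : p.Nodup) :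
    p ≠ [] → ∃ A a, stackSort p = A ++ [a] ∧ ∀ x ∈ A, x < a := by
  refine nodup_max_induction (P := fun p => p ≠ [] → ∃ A a, stackSort p = A ++ [a] ∧
    ∀ x ∈ A, x < a) (fun h => absurd rfl h) ?_ p hp
  intro l n r hlr hl hr _ _ _
  rw [List.nodup_middle, List.nodup_cons, List.nodup_append] at hlr
  refine ⟨_, n, stackSort_append_cons hl hr, fun x hx => ?_⟩
  rcases List.mem_append.1 hx with hx | hx
  · exact hl x ((stackSort_perm hlr.2.1).mem_iff.1 hx)
  · exact hr x ((stackSort_perm hlr.2.2.1).mem_iff.1 hx)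

theorem exists_eq_append_of_pairwise {a : ℕ} {B : List ℕ}
    (h : B.Pairwise fun y y' => y' < a → y < a) :
    ∃ B₁ B₂, B = B₁ ++ B₂ ∧ (∀ y ∈ B₁, y < a) ∧ ∀ y ∈ B₂, a ≤ y := by
  induction B with
  | nil => exact ⟨[], [], by simp⟩
  | cons y B ih =>
    rw [List.pairwise_cons] at h
    by_cases hy : y < a
    · obtain ⟨B₁, B₂, rfl, h1, h2⟩ := ih h.2
      exact ⟨y :: B₁, B₂, by simp, by simpa [hy] using h1, h2⟩
    · refine ⟨[], y :: B, by simp, by simp, ?_⟩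
      simp only [List.mem_cons, forall_eq_or_imp]
      exact ⟨by omega, fun y' hy' => not_lt.1 fun hlt => hy (h.1 y' hy' hlt)⟩

theorem mem_cuts_node_iff {L R : SplitTree} {j m : ℕ} {A B : List ℕ} {n a : ℕ} {A₀ B₁ B₂ : List ℕ}
    (hL : ∀ m, m ∈ L.cuts ↔ IsCut A m) (hR : ∀ m, m ∈ R.cuts ↔ IsCut B m)
    (hLs : L.size = A.length) (hRs : R.size = B.length) (hn : ∀ x ∈ A ++ B, x < n)
    (hA : A = A₀ ++ [a]) (hA₀ : ∀ x ∈ A₀, x < a) (hAB : ∀ x ∈ A₀, ∀ y ∈ B, x < y)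
    (hB : B = B₁ ++ B₂) (hB₁ : ∀ y ∈ B₁, y < a) (hB₂ : ∀ y ∈ B₂, a < y) (hj : j = B₁.length) :
    m ∈ (SplitTree.node L R j).cuts ↔ IsCut (A ++ B ++ [n]) m := by
  have htake : ∀ k, k < A.length → ∀ x ∈ A.take k, x ∈ A₀ := by
    intro k hk x hx
    rw [hA, List.length_append, List.length_singleton] at hk
    rw [hA, List.take_append_of_le_length (by omega)] at hx
    exact List.mem_of_mem_take hx
  rw [isCut_append_singleton hn]
  simp only [SplitTree.cuts, Finset.mem_union, Finset.mem_erase, Finset.mem_image,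
    Finset.mem_filter, Finset.mem_singleton, hL, hR, hLs, hRs, List.length_append]
  refine or_congr ?_ Iff.rfl
  rcases lt_or_ge m A.length with hm | hm
  · rw [isCut_append_of_le hm.le]
    constructor
    · rintro (h | ⟨k, -, rfl⟩)
      · exact ⟨h.2, fun x hx y hy => hAB x (htake m hm x hx) y hy⟩
      · omega
    · exact fun h => Or.inl ⟨hm.ne, h.1⟩
  · obtain ⟨k, rfl⟩ := Nat.exists_eq_add_of_le hm
    rw [isCut_append_add]
    have hdrop : (∀ x ∈ A, ∀ y ∈ B.drop k, x < y) ↔ B₁.length ≤ k := by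
      constructor
      · intro h
        by_contra! hk
        have h1 : B₁[k] ∈ B.drop k := by
          rw [hB, List.drop_append_of_le_length hk.le, List.drop_eq_getElem_cons hk]
          exact List.mem_append_left _ List.mem_cons_self
        have h2 := h a (by simp [hA]) _ h1
        have h3 := hB₁ _ (List.getElem_mem hk)
        omega
      · intro hk x hx y hy
        obtain ⟨i, rfl⟩ := Nat.exists_eq_add_of_le hk
        rw [hB, List.drop_length_add_append] at hy
        have h1 := hB₂ y (List.mem_of_mem_drop hy)
        rw [hA, List.mem_append, List.mem_singleton] at hx
        rcases hx with hx | rfl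
        · exact (hA₀ x hx).trans h1
        · exact h1
    rw [hdrop]
    constructor
    · rintro (⟨h1, h2, -⟩ | ⟨i, hi, hik⟩)
      · omega
      · obtain rfl : i = k := by omega
        rwa [hj] at hi
    · exact fun h => Or.inr ⟨k, by rwa [hj], rfl⟩

theorem exists_isCode {σ : List ℕ} (hσ : σ.Nodup) :
    Avoids231 (stackSort σ) → ∃ T : SplitTree, T.Valid ∧ T.IsCode σ ∧
      T.weight = zVal ^ σ.length * qVal ^ asc σ ∧ ∀ m, m ∈ T.cuts ↔ IsCut (stackSort σ) m := by
  refine nodup_max_induction (P := fun σ => Avoids231 (stackSort σ) → ∃ T : SplitTree, T.Valid ∧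
    T.IsCode σ ∧ T.weight = zVal ^ σ.length * qVal ^ asc σ ∧
      ∀ m, m ∈ T.cuts ↔ IsCut (stackSort σ) m) ?_ ?_ σ hσ
  · intro _
    refine ⟨.nil, trivial, rfl, by simp [SplitTree.weight, asc], fun m => ?_⟩
    simp [SplitTree.cuts, IsCut, stackSort, sortAux]
  · intro l n r hd hl hr ihl ihr hav
    rw [List.nodup_middle, List.nodup_cons, List.nodup_append] at hd
    obtain ⟨-, hdl, hdr, hdisj⟩ := hd
    rw [stackSort_append_cons hl hr] at hav ⊢
    have hpl := stackSort_perm hdl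
    have hpr := stackSort_perm hdr
    obtain ⟨L, hLv, hLc, hLw, hLcut⟩ :=
      ihl (hav.sublist ((List.sublist_append_left _ _).trans (List.sublist_append_left _ _)))
    obtain ⟨R, hRv, hRc, hRw, hRcut⟩ :=
      ihr (hav.sublist ((List.sublist_append_right _ _).trans (List.sublist_append_left _ _)))
    have hnil : L = .nil ↔ l = [] := by
      constructor
      · rintro rfl
        exact hLc
      · rintro rfl
        have := hLc.length_eq
        cases L
        · rfl
        · simp [SplitTree.size] at this
    have hw : ∀ j, (SplitTree.node L R j).weight =
        zVal ^ (l ++ n :: r).length * qVal ^ asc (l ++ n :: r) := by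
      intro j
      rw [SplitTree.weight, hLw, hRw, asc_append_cons l r hl hr]
      simp only [hnil, List.length_append, List.length_cons]
      split_ifs <;> ring
    rcases eq_or_ne l [] with hl0 | hl0
    · refine ⟨.node L R 0, ⟨hLv, hRv, (hRcut 0).2 (isCut_zero _), fun _ => rfl⟩,
        ⟨l, n, r, rfl, hLc, hRc, hl, hr, fun h => absurd hl0 h⟩, hw 0, fun m => ?_⟩
      have hLn := hnil.2 hl0
      subst hl0 hLn
      have hs : stackSort [] = [] := rfl
      rw [hs, List.nil_append, isCut_append_singleton fun x hx => hr x (hpr.mem_iff.1 hx),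
        hpr.length_eq, hRc.length_eq]
      simp [SplitTree.cuts, SplitTree.size, hRcut, or_comm]
    · obtain ⟨A₀, a, hA, hA₀⟩ := exists_stackSort_eq_append_singleton hdl hl0
      have hal : a ∈ l := hpl.mem_iff.1 (by simp [hA])
      have hA₀l : ∀ x ∈ A₀, x ∈ l := fun x hx => hpl.mem_iff.1 (by simp [hA, hx])
      have hlA₀ : ∀ x ∈ l, x ≠ a → x ∈ A₀ := fun x hx hxa => by
        have := hpl.mem_iff.2 hx
        rw [hA] at this
        simpa [hxa] using this
      have hBr : ∀ y, y ∈ stackSort r ↔ y ∈ r := fun y => hpr.mem_iff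
      have hAB : ∀ x ∈ A₀, ∀ y ∈ stackSort r, x < y := by
        intro x hx y hy
        by_contra! hle
        have hne := hdisj x (hA₀l x hx) y ((hBr y).1 hy)
        refine hav x a y ?_ (by omega) (hA₀ x hx)
        rw [hA]
        refine List.Sublist.trans ?_ (List.sublist_append_left _ _)
        exact ((List.singleton_sublist.2 hx).append (List.Sublist.refl [a])).append
          (List.singleton_sublist.2 hy)
      have hpw : (stackSort r).Pairwise fun y y' => y' < a → y < a := by
        rw [List.pairwise_iff_forall_sublist]
        intro y y' hs hy'
        by_contra! hle
        have hyr : y ∈ r := (hBr y).1 (hs.subset (by simp))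
        have hne := hdisj a hal y hyr
        refine hav a y y' ?_ hy' (by omega)
        rw [hA]
        refine List.Sublist.trans ?_ (List.sublist_append_left _ _)
        exact (List.sublist_append_right A₀ [a]).append hs
      obtain ⟨B₁, B₂, hB, hB₁, hB₂⟩ := exists_eq_append_of_pairwise hpw
      have hB₂' : ∀ y ∈ B₂, a < y := fun y hy =>
        lt_of_le_of_ne (hB₂ y hy) (hdisj a hal y ((hBr y).1 (by simp [hB, hy])))
      have hcard : (r.toFinset.filter (· < a)).card = B₁.length := by
        have hdB : (stackSort r).Nodup := hpr.nodup_iff.2 hdr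
        rw [hB, List.nodup_append] at hdB
        rw [← List.toFinset_card_of_nodup hdB.1]
        congr 1
        ext y
        simp only [Finset.mem_filter, List.mem_toFinset, ← hBr, hB, List.mem_append]
        constructor
        · rintro ⟨h | h, h'⟩
          · exact h
          · exact absurd (hB₂ y h) (by omega)
        · exact fun h => ⟨Or.inl h, hB₁ y h⟩
      have hcut : IsCut (stackSort r) B₁.length := by
        have := isCut_append_add (u := B₁) (v := B₂) (k := 0)
        rw [add_zero, ← hB] at this
        refine this.2 ⟨isCut_zero _, fun x hx y hy => ?_⟩
        exact (hB₁ x hx).trans (hB₂' y (by simpa using hy))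
      refine ⟨.node L R B₁.length, ⟨hLv, hRv, (hRcut _).2 hcut, fun h => absurd (hnil.1 h) hl0⟩,
        ⟨l, n, r, rfl, hLc, hRc, hl, hr, fun _ => ⟨a, hal, fun x hx hxa => hA₀ x (hlA₀ x hx hxa),
          fun x hx hxa y hy => hAB x (hlA₀ x hx hxa) y ((hBr y).2 hy), hcard⟩⟩, hw _, fun m => ?_⟩
      refine mem_cuts_node_iff hLcut hRcut ?_ ?_ ?_ hA hA₀ hAB hB hB₁ hB₂' rfl
      · rw [hpl.length_eq, hLc.length_eq]
      · rw [hpr.length_eq, hRc.length_eq]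
      · intro x hx
        rcases List.mem_append.1 hx with hx | hx
        · exact hl x (hpl.mem_iff.1 hx)
        · exact hr x (hpr.mem_iff.1 hx)

theorem avoids231_of_pairwise_stackSort {w : List ℕ} (hw : w.Nodup) :
    (stackSort w).Pairwise (· < ·) → Avoids231 w := by
  refine nodup_max_induction (P := fun w => (stackSort w).Pairwise (· < ·) → Avoids231 w) ?_ ?_ w hw
  · intro _ b c a h
    simp at h
  · intro l n r hd hl hr ihl ihr hs b c a h hab hbc
    rw [List.nodup_middle, List.nodup_cons, List.nodup_append] at hd
    rw [stackSort_append_cons hl hr, List.pairwise_append, List.pairwise_append] at hs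
    obtain ⟨⟨hsl, hsr, hlr⟩, -, -⟩ := hs
    have hlr' : ∀ x ∈ l, ∀ y ∈ r, x < y := fun x hx y hy =>
      hlr x ((stackSort_perm hd.2.1).mem_iff.2 hx) y ((stackSort_perm hd.2.2.1).mem_iff.2 hy)
    have hlnr : ∀ x ∈ l, ∀ y ∈ n :: r, x < y := by
      intro x hx y hy
      rcases List.mem_cons.1 hy with rfl | hy
      · exact hl x hx
      · exact hlr' x hx y hy
    obtain ⟨u, v, huv, hu, hv⟩ := List.sublist_append_iff.1 h
    rcases u with _ | ⟨b', u⟩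
    · rw [List.nil_append] at huv
      subst huv
      rcases List.sublist_cons_iff.1 hv with hv | ⟨r', hr', hv⟩
      · exact ihr hsr b c a hv hab hbc
      · simp only [List.cons.injEq] at hr'
        obtain ⟨rfl, rfl⟩ := hr'
        have := hr c (hv.subset (by simp))
        omega
    · rw [List.cons_append, List.cons.injEq] at huv
      obtain ⟨rfl, huv⟩ := huv
      have hb : b ∈ l := hu.subset (by simp)
      rcases List.eq_nil_or_concat v with rfl | ⟨v', y, rfl⟩
      · rw [List.append_nil] at huv
        subst huv
        exact ihl hsl b c a hu hab hbc
      · have hya : a = y := by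
          have := congrArg List.getLast? huv
          simpa using this
        have := hlnr b hb a (hv.subset (by simp [hya]))
        omega

theorem stackSortable_card_le {n : ℕ} (hn : n ≠ 0) :
    (W₃ n : ℝ) * (33 / 14) ^ (n - 1) * zVal ^ n ≤ sVal := by
  classical
  set P : Finset (List ℕ) := (List.range' 1 n).permutations.toFinset.filter
    fun p => stackSort^[3] p = List.range' 1 n with hP
  set Q : Finset (List ℕ) := (List.range' 1 n).permutations.toFinset.filter
    fun σ => Avoids231 (stackSort σ) with hQ
  have hz : 0 ≤ zVal := by unfold zVal; norm_num
  have hnd : (List.range' 1 n).Nodup := List.nodup_range'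
  have hW : W₃ n = P.card := by
    rw [W₃, ← Set.ncard_coe_finset]
    congr 1
    ext p
    simp [hP]
  have hmap : ∀ p ∈ P, stackSort p ∈ Q := by
    intro p hp
    simp only [hP, hQ, Finset.mem_filter, List.mem_toFinset, List.mem_permutations] at hp ⊢
    obtain ⟨hp, hs⟩ := hp
    have hpd : p.Nodup := hp.nodup_iff.2 hnd
    have h1 := stackSort_perm hpd
    have h2 := stackSort_perm (h1.nodup_iff.2 hpd)
    refine ⟨h1.trans hp, avoids231_of_pairwise_stackSort (h2.nodup_iff.2 (h1.nodup_iff.2 hpd)) ?_⟩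
    have hs' : stackSort (stackSort (stackSort p)) = List.range' 1 n := hs
    rw [hs']
    exact List.pairwise_lt_range'
  have hQn : ∀ σ ∈ Q, σ.Perm (List.range' 1 n) ∧ σ.Nodup ∧ σ.length = n ∧
      Avoids231 (stackSort σ) := by
    intro σ hσ
    simp only [hQ, Finset.mem_filter, List.mem_toFinset, List.mem_permutations] at hσ
    exact ⟨hσ.1, hσ.1.nodup_iff.2 hnd, by simpa using hσ.1.length_eq, hσ.2⟩
  have hT : ∀ σ, ∃ T : SplitTree, σ ∈ Q → T ∈ SplitTree.trees n ∧ T.IsCode σ ∧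
      T.weight = zVal ^ n * qVal ^ asc σ := by
    intro σ
    by_cases hσ : σ ∈ Q
    · obtain ⟨-, h2, h3, h4⟩ := hQn σ hσ
      obtain ⟨T, hv, hc, hw, -⟩ := exists_isCode h2 h4
      refine ⟨T, fun _ => ⟨SplitTree.mem_trees hv ?_ (by rw [← hc.length_eq, h3]), hc, ?_⟩⟩
      · rintro rfl
        rw [SplitTree.IsCode] at hc
        subst hc
        exact hn h3.symm
      · rw [hw, h3]
    · exact ⟨.nil, fun h => absurd h hσ⟩
  choose f hf using hT
  have hinj : Set.InjOn f Q := by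
    intro σ hσ σ' hσ' h
    refine (hf σ hσ).2.1.unique (h ▸ (hf σ' hσ').2.1) ?_ (hQn σ hσ).2.1
    exact (hQn σ hσ).1.trans (hQn σ' hσ').1.symm
  have hfib : ∀ σ ∈ Q, ((P.filter fun p => stackSort p = σ).card : ℝ) * (33 / 14) ^ (n - 1) ≤
      qVal ^ asc σ := by
    intro σ hσ
    rw [← (hQn σ hσ).2.2.1]
    refine card_preimage_le σ _ fun p hp => ?_
    simp only [hP, Finset.mem_filter, List.mem_toFinset, List.mem_permutations] at hp
    exact ⟨hp.1.1.nodup_iff.2 hnd, hp.2⟩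
  calc (W₃ n : ℝ) * (33 / 14) ^ (n - 1) * zVal ^ n
      = ∑ σ ∈ Q, ((P.filter fun p => stackSort p = σ).card : ℝ) * (33 / 14) ^ (n - 1) *
          zVal ^ n := by
        rw [hW, Finset.card_eq_sum_card_fiberwise hmap, Nat.cast_sum, Finset.sum_mul,
          Finset.sum_mul]
    _ ≤ ∑ σ ∈ Q, (f σ).weight := by
        refine Finset.sum_le_sum fun σ hσ => ?_
        rw [(hf σ hσ).2.2, mul_comm (zVal ^ n)]
        exact mul_le_mul_of_nonneg_right (hfib σ hσ) (pow_nonneg hz n)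
    _ = ∑ T ∈ Q.image f, T.weight := (Finset.sum_image hinj).symm
    _ ≤ ∑ T ∈ SplitTree.trees n, T.weight := by
        refine Finset.sum_le_sum_of_subset_of_nonneg ?_ fun T _ _ => T.weight_nonneg
        intro T hT
        obtain ⟨σ, hσ, rfl⟩ := Finset.mem_image.1 hT
        exact (hf σ hσ).1
    _ ≤ sVal := SplitTree.sum_weight_trees_le n

/-- The exponential growth rate of 3-stack sortable permutations is at most
`12.533`: `limsup_{n→∞} W_3(n)^{1/n} ≤ 12.533`. -/
theorem stmt_15 :
    limsup (fun n : ℕ => (W₃ n : ℝ) ^ ((1 : ℝ) / n)) atTop ≤ 12.533 := by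
  set K : ℝ := 1 / ((33 / 14) * zVal) with hK
  set C : ℝ := sVal * (33 / 14) with hC
  have hzv : 0 < zVal := by unfold zVal; norm_num
  have hK0 : 0 < K := by positivity
  have hC0 : 0 < C := by simp only [hC, sVal]; norm_num
  have hbound : ∀ n : ℕ, n ≠ 0 → (W₃ n : ℝ) ≤ C * K ^ n := by
    intro n hn
    have h := stackSortable_card_le hn
    have e : (33 / 14 : ℝ) ^ n = (33 / 14) ^ (n - 1) * (33 / 14) := by
      rw [← pow_succ, Nat.sub_add_cancel (Nat.pos_of_ne_zero hn)]
    rw [hC, hK, div_pow, one_pow, mul_pow, mul_one_div, le_div_iff₀ (by positivity), e]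
    nlinarith [h]
  have hlim : Tendsto (fun n : ℕ => C ^ ((1 : ℝ) / n) * K) atTop (nhds (1 * K)) := by
    refine Tendsto.mul_const K ?_
    have h0 : Tendsto (fun n : ℕ => (1 : ℝ) / n) atTop (nhds 0) :=
      tendsto_one_div_atTop_nhds_zero_nat
    simpa using tendsto_const_nhds.rpow h0 (Or.inl hC0.ne')
  have hlt : 1 * K < 12.533 := by
    simp only [hK, zVal]
    norm_num
  refine limsup_le_of_le ?_ ?_
  · refine IsCoboundedUnder.of_frequently_ge (a := 0) (Frequently.of_forall fun n => ?_)
    positivity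
  · filter_upwards [hlim.eventually_lt_const hlt, eventually_ne_atTop 0] with n h1 h2
    refine le_trans ?_ h1.le
    calc (W₃ n : ℝ) ^ ((1 : ℝ) / n) ≤ (C * K ^ n) ^ ((1 : ℝ) / n) :=
          Real.rpow_le_rpow (by positivity) (hbound n h2) (by positivity)
      _ = C ^ ((1 : ℝ) / n) * K := by
          rw [Real.mul_rpow hC0.le (by positivity), one_div, Real.pow_rpow_inv_natCast hK0.le h2]
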